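/- arXiv:2103.16666 — 2 statements merged into one kernel-verified Lean document; each statement's English description precedes it below -/
import Mathlib

section
/- Let μ > −3/2, −1/2 < ν < μ+1 and 0 < β < 1. Fix x* > 0. Then for all x with 0 < x ≤ x*, one has ∫_0^x e^{−βu} u^ν t̃_{μ,ν}(u) du < ((μ+ν+3+2x*)/(2ν+1)) · e^{−βx} x^ν t̃_{μ+1,ν+1}(x). -/
/-!
Put `a = (μ - ν + 3) / 2` and `b = (μ + ν + 3) / 2`, so `a > 1` and `b > 1 / 2`. Factoring out the
leading power, `lommel μ ν x = (x/2)^(μ+1) E(x)` and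
`lommel (μ+1) (ν+1) x = (x/2)^(μ+2) g(x)`, where `E` and `g` are entire even series with positive
coefficients (`lommelCoeff a b` and `lommelCoeff a (b+1)`). Up to a constant the integrand is
`e^{-βu} u^{r-1} E(u)` with `r = 2b - 1 > 0`.

The recurrence of the Gamma function gives `E = b g + x g'/2` and
`x E' ≥ x² g / 2 - 2 (a-1) E`. These imply that `G(x) = e^{-βx} x^r (E + x g / 2)` satisfies
`G' ≥ (2ν+1) e^{-βx} x^{r-1} E` whenever `β ≤ 1`; since `G(0) = 0`, integrating bounds the integral
by `G(x) / (2ν+1)` (`integral_le`).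

It remains to see that `E + x g / 2 < (b + x) g`, which is `g' < g` (`theta_lt`). This follows
by summing the AM-GM inequalities `2 (2k) x ≤ (2k)² + x²` against the terms of `g`, because the
coefficients `d k` of `g` satisfy `(2k)² d k ≤ d (k-1)`.
-/

open Real MeasureTheory

/-- Normalised modified Lommel function of the first kind. -/
noncomputable def lommel (μ ν x : ℝ) : ℝ :=
  ∑' k : ℕ, (x / 2) ^ (μ + 2 * (k : ℝ) + 1) /
    (Real.Gamma ((k : ℝ) + (μ - ν + 3) / 2) * Real.Gamma ((k : ℝ) + (μ + ν + 3) / 2))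

/-- Coefficient of `x ^ (2 * k)` in the even power series obtained from a modified Lommel function
by factoring out its leading power; `a` and `b` are the shifts in the two Gamma factors. -/
noncomputable def lommelCoeff (a b : ℝ) (k : ℕ) : ℝ :=
  (4 ^ k * (Real.Gamma (k + a) * Real.Gamma (k + b)))⁻¹

/-- The even power series with coefficients `c`. -/
noncomputable def evenSeries (c : ℕ → ℝ) (x : ℝ) : ℝ := ∑' k : ℕ, c k * x ^ (2 * k)

/-- The image of `evenSeries c` under the Euler operator `x d/dx`. -/
noncomputable def thetaSeries (c : ℕ → ℝ) (x : ℝ) : ℝ :=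
  ∑' k : ℕ, (2 * k : ℝ) * (c k * x ^ (2 * k))

/-! ### Even power series with factorially decaying coefficients -/

section EvenSeries

variable {c : ℕ → ℝ} {C : ℝ}

lemma summable_theta (h0 : ∀ k, 0 ≤ c k) (h : ∀ k, c k ≤ C / (k.factorial : ℝ)) (x : ℝ) :
    Summable fun k : ℕ => (2 * k : ℝ) * (c k * x ^ (2 * k)) := by
  have hs := (Real.summable_pow_div_factorial (2 * x ^ 2)).mul_left (2 * C)
  refine Summable.of_nonneg_of_le (fun k => ?_) (fun k => ?_) hs
  · have := h0 k
    rw [pow_mul]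
    positivity
  · have hk : (k : ℝ) ≤ 2 ^ k := by exact_mod_cast (Nat.lt_two_pow_self).le
    have h1 : (k : ℝ) * c k ≤ 2 ^ k * (C / (k.factorial : ℝ)) :=
      mul_le_mul hk (h k) (h0 k) (by positivity)
    have h2 : 0 ≤ (x ^ 2) ^ k := by positivity
    calc (2 * k : ℝ) * (c k * x ^ (2 * k)) = 2 * ((k * c k) * (x ^ 2) ^ k) := by
          rw [pow_mul]; ring
      _ ≤ 2 * ((2 ^ k * (C / (k.factorial : ℝ))) * (x ^ 2) ^ k) := by gcongr
      _ = 2 * C * ((2 * x ^ 2) ^ k / (k.factorial : ℝ)) := by rw [mul_pow]; ring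

lemma summable_even (h0 : ∀ k, 0 ≤ c k) (h : ∀ k, c k ≤ C / (k.factorial : ℝ)) (x : ℝ) :
    Summable fun k : ℕ => c k * x ^ (2 * k) := by
  have hs := (Real.summable_pow_div_factorial (x ^ 2)).mul_left C
  refine Summable.of_nonneg_of_le (fun k => ?_) (fun k => ?_) hs
  · have := h0 k
    rw [pow_mul]
    positivity
  · have h2 : 0 ≤ (x ^ 2) ^ k := by positivity
    calc c k * x ^ (2 * k) = c k * (x ^ 2) ^ k := by rw [pow_mul]
      _ ≤ (C / (k.factorial : ℝ)) * (x ^ 2) ^ k := by gcongr; exact h k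
      _ = C * ((x ^ 2) ^ k / (k.factorial : ℝ)) := by ring

lemma hasDerivAt_even (h0 : ∀ k, 0 ≤ c k) (h : ∀ k, c k ≤ C / (k.factorial : ℝ)) (x : ℝ) :
    ∃ D, HasDerivAt (evenSeries c) D x ∧ x * D = thetaSeries c x := by
  -- `1 ≤ R` makes `R ^ (2 * k)` dominate `y ^ (2 * k - 1)` on the ball of radius `R`.
  set R : ℝ := |x| + 1 with hR
  have hR1 : 1 ≤ R := by have := abs_nonneg x; linarith
  refine ⟨∑' k : ℕ, c k * (((2 * k : ℕ) : ℝ) * x ^ (2 * k - 1)), ?_, ?_⟩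
  · refine hasDerivAt_tsum_of_isPreconnected
      (g := fun k y => c k * y ^ (2 * k))
      (g' := fun k y => c k * (((2 * k : ℕ) : ℝ) * y ^ (2 * k - 1)))
      (t := Metric.ball 0 R) (y₀ := 0) (summable_theta h0 h R) Metric.isOpen_ball
      (convex_ball _ _).isPreconnected ?_ ?_ ?_ (summable_even h0 h 0) ?_
    · intro k y _
      exact (hasDerivAt_pow (2 * k) y).const_mul (c k)
    · intro k y hy
      have hy' : |y| ≤ R := by simpa using (Metric.mem_ball.1 hy).le
      have h1 : |y| ^ (2 * k - 1) ≤ R ^ (2 * k) :=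
        (pow_le_pow_left₀ (abs_nonneg y) hy' _).trans
          (pow_le_pow_right₀ hR1 (Nat.sub_le _ _))
      have h2 := h0 k
      rw [Real.norm_eq_abs, abs_mul, abs_mul, abs_pow, abs_of_nonneg h2,
        abs_of_nonneg (by positivity : (0 : ℝ) ≤ ((2 * k : ℕ) : ℝ))]
      calc c k * (((2 * k : ℕ) : ℝ) * |y| ^ (2 * k - 1))
          ≤ c k * (((2 * k : ℕ) : ℝ) * R ^ (2 * k)) := by gcongr
        _ = (2 * k : ℝ) * (c k * R ^ (2 * k)) := by push_cast; ring
    · simp only [Metric.mem_ball, dist_self]; linarith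
    · simp only [Metric.mem_ball, dist_zero_right, Real.norm_eq_abs]; linarith
  · rw [← tsum_mul_left, thetaSeries]
    refine tsum_congr fun k => ?_
    rcases k with _ | k
    · simp
    · have : 2 * (k + 1) = (2 * (k + 1) - 1) + 1 := by omega
      conv_rhs => rw [this, pow_succ]
      push_cast
      ring

lemma continuous_even (h0 : ∀ k, 0 ≤ c k) (h : ∀ k, c k ≤ C / (k.factorial : ℝ)) :
    Continuous (evenSeries c) :=
  continuous_iff_continuousAt.2 fun x =>
    let ⟨_, hD, _⟩ := hasDerivAt_even h0 h x
    hD.continuousAt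

lemma even_nonneg (h0 : ∀ k, 0 ≤ c k) (x : ℝ) : 0 ≤ evenSeries c x :=
  tsum_nonneg fun k => by
    have := h0 k
    rw [pow_mul]
    positivity

end EvenSeries

/-! ### Recurrences and inequalities for the Lommel series -/

section Coeff

variable {a b : ℝ}

lemma coeff_pos (ha : 0 < a) (hb : 0 < b) (k : ℕ) : 0 < lommelCoeff a b k := by
  have h1 : 0 < Real.Gamma (k + a) := Real.Gamma_pos_of_pos (by positivity)
  have h2 : 0 < Real.Gamma (k + b) := Real.Gamma_pos_of_pos (by positivity)
  unfold lommelCoeff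
  positivity

lemma coeff_eq (hb : 0 < b) (k : ℕ) :
    lommelCoeff a b k = (k + b) * lommelCoeff a (b + 1) k := by
  have h : (k : ℝ) + b ≠ 0 := by positivity
  have h3 : Real.Gamma (k + (b + 1)) = (k + b) * Real.Gamma (k + b) := by
    rw [← add_assoc]; exact Real.Gamma_add_one h
  unfold lommelCoeff
  rw [h3]
  simp only [mul_inv]
  field_simp

lemma coeff_succ (ha : 0 < a) (k : ℕ) :
    4 * (k + a) * lommelCoeff a b (k + 1) = lommelCoeff a (b + 1) k := by
  have h : (k : ℝ) + a ≠ 0 := by positivity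
  have h3 : Real.Gamma (((k + 1 : ℕ) : ℝ) + a) = (k + a) * Real.Gamma (k + a) := by
    rw [← Real.Gamma_add_one h]; congr 1; push_cast; ring
  have h4 : ((k + 1 : ℕ) : ℝ) + b = k + (b + 1) := by push_cast; ring
  unfold lommelCoeff
  rw [h3, h4, pow_succ]
  simp only [mul_inv]
  field_simp

lemma coeff_rec (ha : 0 < a) (hb : 0 < b) (k : ℕ) :
    4 * (k + a) * (k + b) * lommelCoeff a b (k + 1) = lommelCoeff a b k := by
  rw [coeff_eq hb k, ← coeff_succ ha k]; ring

lemma coeff_le (ha : 1 < a) (hb : 1 / 2 < b) (k : ℕ) :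
    lommelCoeff a b k ≤ lommelCoeff a b 0 / (k.factorial : ℝ) := by
  have ha0 : 0 < a := by linarith
  have hb0 : 0 < b := by linarith
  induction k with
  | zero => simp
  | succ k ih =>
    have hk : (0 : ℝ) ≤ k := k.cast_nonneg
    have h1 := coeff_rec ha0 hb0 k
    have h2 := coeff_pos ha0 hb0 (k + 1)
    have h3 : (k : ℝ) + 1 ≤ 4 * (k + a) * (k + b) := by nlinarith
    have h4 : ((k : ℝ) + 1) * lommelCoeff a b (k + 1) ≤ lommelCoeff a b k := by
      rw [← h1]; gcongr
    rw [Nat.factorial_succ, Nat.cast_mul, Nat.cast_succ, mul_comm ((k : ℝ) + 1), ← div_div,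
      le_div_iff₀ (by positivity)]
    linarith

/-- In terms of the series `E` and `g`: `E = b g + x g' / 2`. -/
lemma even_eq (ha : 1 < a) (hb : 1 / 2 < b) (x : ℝ) :
    evenSeries (lommelCoeff a b) x = b * evenSeries (lommelCoeff a (b + 1)) x
      + thetaSeries (lommelCoeff a (b + 1)) x / 2 := by
  have ha0 : 0 < a := by linarith
  have hb0 : 0 < b := by linarith
  have h0 := fun k => (coeff_pos ha0 (by linarith : 0 < b + 1) k).le
  have hC := coeff_le ha (by linarith : 1 / 2 < b + 1)
  unfold evenSeries thetaSeries
  rw [← tsum_mul_left, ← tsum_div_const,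
    ← ((summable_even h0 hC x).mul_left b).tsum_add ((summable_theta h0 hC x).div_const 2)]
  refine tsum_congr fun k => ?_
  rw [coeff_eq hb0 k]; ring

/-- In terms of the series `E` and `g`: `x² g / 2 - 2 (a - 1) E ≤ x E'`. The difference of the two
sides is the constant term `2 (a - 1) E(0)`. -/
lemma theta_ge (ha : 1 < a) (hb : 1 / 2 < b) (x : ℝ) :
    x ^ 2 / 2 * evenSeries (lommelCoeff a (b + 1)) x - 2 * (a - 1) * evenSeries (lommelCoeff a b) x
      ≤ thetaSeries (lommelCoeff a b) x := by
  have ha0 : 0 < a := by linarith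
  have hb0 : 0 < b := by linarith
  have h0 := fun k => (coeff_pos ha0 hb0 k).le
  have hC := coeff_le ha hb
  have hs1 := summable_theta h0 hC x
  have hs2 := (summable_even h0 hC x).mul_left (2 * (a - 1))
  have key : thetaSeries (lommelCoeff a b) x + 2 * (a - 1) * evenSeries (lommelCoeff a b) x
      = 2 * (a - 1) * lommelCoeff a b 0 + x ^ 2 / 2 * evenSeries (lommelCoeff a (b + 1)) x := by
    unfold evenSeries thetaSeries
    rw [← tsum_mul_left, ← hs1.tsum_add hs2, (hs1.add hs2).tsum_eq_zero_add, ← tsum_mul_left]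
    congr 1
    · simp
    · refine tsum_congr fun k => ?_
      rw [← coeff_succ ha0 k]; push_cast; ring
  have := h0 0
  have : 0 ≤ 2 * (a - 1) * lommelCoeff a b 0 := mul_nonneg (by linarith) this
  linarith

/-- In terms of the series `g`: `x g' < x g` for `x > 0`. -/
lemma theta_lt (ha : 1 < a) (hb : 1 < b) {x : ℝ} (hx : 0 < x) :
    thetaSeries (lommelCoeff a b) x < x * evenSeries (lommelCoeff a b) x := by
  have ha0 : 0 < a := by linarith
  have hb0 : 0 < b := by linarith
  have h0 := fun k => (coeff_pos ha0 hb0 k).le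
  have hC := coeff_le ha (by linarith : 1 / 2 < b)
  have hs1 := summable_theta h0 hC x
  have hs2 := summable_even h0 hC x
  have hs1' := (summable_nat_add_iff 1).2 hs1
  have hs2' := (summable_nat_add_iff 1).2 hs2
  have hE := hs2.tsum_eq_zero_add
  have hT := hs1.tsum_eq_zero_add
  have hle := Summable.tsum_le_tsum (fun k => ?_) (hs1'.mul_left (2 * x))
    ((hs2.mul_left (x ^ 2)).add (hs2'.mul_left (x ^ 2)))
  · rw [(hs2.mul_left (x ^ 2)).tsum_add (hs2'.mul_left (x ^ 2)), tsum_mul_left, tsum_mul_left,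
      tsum_mul_left] at hle
    have hpos := coeff_pos ha0 hb0 0
    unfold evenSeries thetaSeries
    simp only [Nat.cast_zero, mul_zero, zero_mul, zero_add, pow_zero, mul_one] at hE hT
    rw [← hT] at hle
    have h3 : 0 < x ^ 2 * lommelCoeff a b 0 := by positivity
    refine lt_of_mul_lt_mul_left ?_ (by positivity : (0 : ℝ) ≤ 2 * x)
    generalize hA : (∑' k : ℕ, lommelCoeff a b k * x ^ (2 * k)) = A at *
    generalize hB : (∑' k : ℕ, lommelCoeff a b (k + 1) * x ^ (2 * (k + 1))) = B at *
    subst hE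
    linarith
  · -- AM-GM for `2 * (k + 1)` and `x`, with `(2 * (k + 1)) ^ 2 * d (k + 1) ≤ d k`.
    have hd := coeff_pos ha0 hb0 (k + 1)
    have hk : (0 : ℝ) ≤ k := k.cast_nonneg
    have h1 : 4 * ((k : ℝ) + 1) ^ 2 * lommelCoeff a b (k + 1) ≤ lommelCoeff a b k := by
      rw [← coeff_rec ha0 hb0 k]
      exact mul_le_mul_of_nonneg_right (by nlinarith) hd.le
    have hp : 0 < x ^ (2 * k) * x ^ 2 := by positivity
    have h2 : 4 * ((k : ℝ) + 1) * x * lommelCoeff a b (k + 1)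
        ≤ lommelCoeff a b k + x ^ 2 * lommelCoeff a b (k + 1) := by
      nlinarith [mul_nonneg hd.le (sq_nonneg (2 * ((k : ℝ) + 1) - x))]
    calc _ = (4 * ((k : ℝ) + 1) * x * lommelCoeff a b (k + 1)) * (x ^ (2 * k) * x ^ 2) := by
          push_cast; ring
      _ ≤ (lommelCoeff a b k + x ^ 2 * lommelCoeff a b (k + 1)) * (x ^ (2 * k) * x ^ 2) := by
          gcongr
      _ = _ := by ring

/-- The integral bound obtained by comparing the integrand with the derivative of
`e^{-βx} x^{2b-1} (E + x g / 2)`. In the application `2 * (b - a) + 1 = 2 * ν + 1`. -/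
lemma integral_le (ha : 1 < a) (hb : 1 / 2 < b) {β : ℝ} (hβ : β ≤ 1) {x : ℝ}
    (hx : 0 < x) :
    (∫ u in (0 : ℝ)..x, (2 * (b - a) + 1) *
        (u ^ (2 * b - 2) * (Real.exp (-β * u) * evenSeries (lommelCoeff a b) u))) ≤
      Real.exp (-β * x) * (x ^ (2 * b - 1) * (evenSeries (lommelCoeff a b) x
        + x / 2 * evenSeries (lommelCoeff a (b + 1)) x)) := by
  have ha0 : 0 < a := by linarith
  have hb0 : 0 < b := by linarith
  have h0 := fun k => (coeff_pos ha0 hb0 k).le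
  have hC := coeff_le ha hb
  have h0' := fun k => (coeff_pos ha0 (by linarith : 0 < b + 1) k).le
  have hC' := coeff_le ha (by linarith : 1 / 2 < b + 1)
  have hcE := continuous_even h0 hC
  have hcg := continuous_even h0' hC'
  set E := evenSeries (lommelCoeff a b) with hE
  set g := evenSeries (lommelCoeff a (b + 1)) with hg
  choose E' hE' hE'' using hasDerivAt_even h0 hC
  choose g' hg' hg'' using hasDerivAt_even h0' hC'
  have hint : IntervalIntegrable (fun u : ℝ => (2 * (b - a) + 1) *
      (u ^ (2 * b - 2) * (Real.exp (-β * u) * E u))) volume 0 x := by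
    refine ((intervalIntegral.intervalIntegrable_rpow' (by linarith)).mul_continuousOn
      ?_).const_mul _
    exact Continuous.continuousOn (by fun_prop)
  have hcont : Continuous fun y : ℝ =>
      Real.exp (-β * y) * (y ^ (2 * b - 1) * (E y + y / 2 * g y)) := by
    have : Continuous fun y : ℝ => y ^ (2 * b - 1) :=
      Real.continuous_rpow_const (by linarith)
    fun_prop
  have hmain := intervalIntegral.integral_le_sub_of_hasDeriv_right_of_le hx.le
    (g := fun y : ℝ => Real.exp (-β * y) * (y ^ (2 * b - 1) * (E y + y / 2 * g y)))
    (g' := fun y : ℝ => (Real.exp (-β * y) * (-β * 1)) * (y ^ (2 * b - 1) * (E y + y / 2 * g y))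
      + Real.exp (-β * y) * (((2 * b - 1) * y ^ (2 * b - 1 - 1)) * (E y + y / 2 * g y)
        + y ^ (2 * b - 1) * (E' y + (1 / 2 * g y + y / 2 * g' y))))
    hcont.continuousOn ?_ ((intervalIntegrable_iff_integrableOn_Icc_of_le hx.le).1 hint) ?_
  · refine hmain.trans ?_
    simp [Real.zero_rpow (by linarith : 2 * b - 1 ≠ 0)]
  · intro y hy
    refine HasDerivAt.hasDerivWithinAt ?_
    refine ((hasDerivAt_id' y).const_mul (-β)).exp.mul
      ((Real.hasDerivAt_rpow_const (Or.inl hy.1.ne')).mul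
        ((hE' y).add (((hasDerivAt_id' y).div_const 2).mul (hg' y))))
  · intro y hy
    have hy0 : 0 < y := hy.1
    have hp1 : y ^ (2 * b - 1) = y ^ (2 * b - 2) * y := by
      rw [← Real.rpow_add_one hy0.ne']; congr 1; ring
    have hp2 : y ^ (2 * b - 1 - 1) = y ^ (2 * b - 2) := by congr 1; ring
    have h1 := theta_ge ha hb y
    have h2 := even_eq ha hb y
    rw [← hE'' y] at h1
    rw [← hg'' y] at h2
    have h3 : 0 ≤ E y := even_nonneg h0 y
    have h4 : 0 ≤ g y := even_nonneg h0' y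
    have h5 : 0 ≤ (1 - β) * (y * (E y + y / 2 * g y)) :=
      mul_nonneg (by linarith) (by positivity)
    have hq : 0 ≤ y ^ (2 * b - 2) * Real.exp (-β * y) := by positivity
    change _ * (_ * (_ * E y)) ≤ _
    change y ^ 2 / 2 * g y - 2 * (a - 1) * E y ≤ _ at h1
    change E y = b * g y + _ at h2
    have h6 : y * E y = b * y * g y + y * (y * g' y) / 2 := by rw [h2]; ring
    have hbr : (2 * (b - a) + 1) * E y ≤ -β * y * (E y + y / 2 * g y)
        + (2 * b - 1) * (E y + y / 2 * g y) + y * E' y + y * (1 / 2 * g y + y / 2 * g' y) := by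
      linarith
    rw [hp1, hp2]
    calc _ = y ^ (2 * b - 2) * Real.exp (-β * y) * ((2 * (b - a) + 1) * E y) := by ring
      _ ≤ y ^ (2 * b - 2) * Real.exp (-β * y) * (-β * y * (E y + y / 2 * g y)
        + (2 * b - 1) * (E y + y / 2 * g y) + y * E' y + y * (1 / 2 * g y + y / 2 * g' y)) := by
          gcongr
      _ = _ := by ring

end Coeff

/-! ### The integral inequality for the Lommel function -/

lemma lommel_eq (μ ν : ℝ) {x : ℝ} (hx : 0 < x) :
    lommel μ ν x = (x / 2) ^ (μ + 1) *
      evenSeries (lommelCoeff ((μ - ν + 3) / 2) ((μ + ν + 3) / 2)) x := by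
  unfold lommel evenSeries lommelCoeff
  rw [← tsum_mul_left]
  refine tsum_congr fun k => ?_
  have h : (x / 2) ^ (μ + 2 * (k : ℝ) + 1) = (x / 2) ^ (μ + 1) * (x ^ (2 * k) / 4 ^ k) := by
    have : μ + 2 * (k : ℝ) + 1 = (μ + 1) + ((2 * k : ℕ) : ℝ) := by push_cast; ring
    rw [this, Real.rpow_add (by positivity), Real.rpow_natCast, div_pow, pow_mul 2]
    norm_num
  rw [h, mul_inv, div_eq_mul_inv, div_eq_mul_inv]
  ring

theorem stmt0 (μ ν β xs : ℝ) (hμ : μ > -3/2) (hν1 : -1/2 < ν) (hν2 : ν < μ + 1)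
    (hβ1 : 0 < β) (hβ2 : β < 1) (hxs : 0 < xs) :
    ∀ x : ℝ, 0 < x → x ≤ xs →
      ∫ u in (0:ℝ)..x, Real.exp (-β * u) * u ^ ν * lommel μ ν u <
        (μ + ν + 3 + 2 * xs) / (2 * ν + 1) *
          (Real.exp (-β * x) * x ^ ν * lommel (μ + 1) (ν + 1) x) := by
  intro x hx hxx
  have hn : 0 < 2 * ν + 1 := by linarith
  have hL := lommel_eq (μ + 1) (ν + 1) hx
  rw [show (μ + 1 - (ν + 1) + 3) / 2 = (μ - ν + 3) / 2 by ring,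
    show (μ + 1 + (ν + 1) + 3) / 2 = (μ + ν + 3) / 2 + 1 by ring] at hL
  have hI : (∫ u in (0:ℝ)..x, Real.exp (-β * u) * u ^ ν * lommel μ ν u) =
      (1 / 2) ^ (μ + 1) / (2 * ν + 1) *
      ∫ u in (0:ℝ)..x, (2 * ((μ + ν + 3) / 2 - (μ - ν + 3) / 2) + 1) *
        (u ^ (2 * ((μ + ν + 3) / 2) - 2) * (Real.exp (-β * u) *
          evenSeries (lommelCoeff ((μ - ν + 3) / 2) ((μ + ν + 3) / 2)) u)) := by
    rw [← intervalIntegral.integral_const_mul]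
    -- The integrands are compared on `(0, x]` only: at `0` the powers take junk values.
    refine intervalIntegral.integral_congr_ae (Filter.Eventually.of_forall fun u hu => ?_)
    rw [Set.uIoc_of_le hx.le] at hu
    have hu0 : 0 < u := hu.1
    have hp : u ^ (2 * ((μ + ν + 3) / 2) - 2) = u ^ ν * u ^ (μ + 1) := by
      rw [← Real.rpow_add hu0]; congr 1; ring
    rw [lommel_eq μ ν hu0, hp, div_eq_mul_one_div u 2,
      Real.mul_rpow hu0.le (by norm_num)]
    field_simp
    ring
  have ha : 1 < (μ - ν + 3) / 2 := by linarith
  have hb : 1 / 2 < (μ + ν + 3) / 2 := by linarith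
  have h1 := integral_le ha hb hβ2.le hx
  have h2 := even_eq ha hb x
  have h3 := theta_lt ha (by linarith : 1 < (μ + ν + 3) / 2 + 1) hx
  have h4 := even_nonneg (fun k => (coeff_pos (by linarith : 0 < (μ - ν + 3) / 2)
    (by linarith : 0 < (μ + ν + 3) / 2 + 1) k).le) x
  have hp : x ^ (2 * ((μ + ν + 3) / 2) - 1) = x ^ ν * x ^ (μ + 1 + 1) := by
    rw [← Real.rpow_add hx]; congr 1; ring
  rw [hI, hL, div_eq_mul_one_div x 2, Real.mul_rpow hx.le (by norm_num),
    Real.rpow_add_one (by norm_num : (1 / 2 : ℝ) ≠ 0) (μ + 1)]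
  rw [hp] at h1
  set g := evenSeries (lommelCoeff ((μ - ν + 3) / 2) ((μ + ν + 3) / 2 + 1)) x
  set E := evenSeries (lommelCoeff ((μ - ν + 3) / 2) ((μ + ν + 3) / 2)) x
  have h5 : E + x / 2 * g < ((μ + ν + 3) / 2 + xs) * g := by
    have := mul_le_mul_of_nonneg_right hxx h4
    linarith
  calc _ ≤ (1 / 2) ^ (μ + 1) / (2 * ν + 1) *
        (Real.exp (-β * x) * (x ^ ν * x ^ (μ + 1 + 1) * (E + x / 2 * g))) := by gcongr
    _ < (1 / 2) ^ (μ + 1) / (2 * ν + 1) *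
        (Real.exp (-β * x) * (x ^ ν * x ^ (μ + 1 + 1) * (((μ + ν + 3) / 2 + xs) * g))) := by
          gcongr
    _ = _ := by ring
end

section
/- Let μ > −3/2, −1/2 < ν < μ+1 and 0 < β < 1. Fix x* > 1/(1−β). Then for all x ≥ x*, one has ∫_0^x e^{−βu} u^ν t̃_{μ,ν}(u) du < M_{μ,ν,β}(x*) · e^{−βx} x^ν t̃_{μ+1,ν+1}(x). -/
/-!
Write `t = t̃_{μ,ν}` and `T = t̃_{μ+1,ν+1}`. For `x > 0` one has
`t(x) = (x/2)^(μ+1) S(a, b; (x/2)²)` with `a = (μ-ν+3)/2`, `b = (μ+ν+3)/2` and the entire series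
`S(a, b; z) = ∑ zᵏ / (Γ(k+a) Γ(k+b))`. Two first-order relations for `S` (`mul_S'_add` and
`mul_S'_add'`) give `T' = t - (ν+1) T / x` and `t' = T + ν t / x + A` with `A ≥ 0`.
They imply the following.

* `(eˣ x^(ν+1) (t - T))' = eˣ x^(ν+1) ((2ν+1) t / x + A) > 0`, so `T < t` (`lommel_succ_lt`).
* Using `T < t` with `μ, ν` shifted by one, `x t < (μ+ν+3+x) T` (`mul_lommel_lt`).
* `(e^{-x} x^(ν+1) (t + T))' ≥ (2ν+1) e^{-x} x^ν t`, so
  `(2ν+1) ∫₀ˣ e^{-u} u^ν t ≤ e^{-x} x^(ν+1) (t + T)` (`integral_exp_neg_le`); since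
  `e^{-βu} ≤ e^{(1-β)x} e^{-u}` for `u ≤ x`, the previous bound yields the theorem at `x = x*`,
  with the first entry of the maximum.
* For `x ≥ x*`, the derivative of `M e^{-βx} x^ν T` is
  `M e^{-βx} x^ν (t - (β + 1/x) T) ≥ M (1 - β - 1/x) e^{-βx} x^ν t ≥ e^{-βx} x^ν t`, by `T < t` and
  the second entry of the maximum. Integrating from `x*` to `x` finishes the proof.
-/

open Real MeasureTheory

open Set Filter Topology

namespace LommelAux

/-! ### The entire series `S(a, b; z)` -/

/-- The coefficient `1 / (Γ(k+a) Γ(k+b))`. -/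
noncomputable def p (a b : ℝ) (k : ℕ) : ℝ := 1 / (Real.Gamma (k + a) * Real.Gamma (k + b))

/-- The entire function `∑ zᵏ / (Γ(k+a) Γ(k+b))`. -/
noncomputable def S (a b z : ℝ) : ℝ := ∑' k : ℕ, p a b k * z ^ k

/-- The termwise derivative of `S a b`; the term `k = 0` vanishes because of the factor `k`. -/
noncomputable def S' (a b z : ℝ) : ℝ := ∑' k : ℕ, p a b k * (k * z ^ (k - 1))

variable {a b : ℝ}

lemma p_pos (ha : 0 < a) (hb : 0 < b) (k : ℕ) : 0 < p a b k := by
  have h1 : 0 < Real.Gamma (k + a) := Real.Gamma_pos_of_pos (by positivity)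
  have h2 : 0 < Real.Gamma (k + b) := Real.Gamma_pos_of_pos (by positivity)
  unfold p; positivity

lemma p_succ (ha : 0 < a) (hb : 0 < b) (k : ℕ) :
    p a b (k + 1) * ((k + a) * (k + b)) = p a b k := by
  have h1 : 0 < Real.Gamma (k + a) := Real.Gamma_pos_of_pos (by positivity)
  have h2 : 0 < Real.Gamma (k + b) := Real.Gamma_pos_of_pos (by positivity)
  have h3 : (k : ℝ) + a ≠ 0 := by positivity
  have h4 : (k : ℝ) + b ≠ 0 := by positivity
  unfold p
  rw [show ((k + 1 : ℕ) : ℝ) + a = (k + a) + 1 by push_cast; ring,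
    show ((k + 1 : ℕ) : ℝ) + b = (k + b) + 1 by push_cast; ring,
    Real.Gamma_add_one h3, Real.Gamma_add_one h4]
  field_simp

lemma p_b_succ (hb : 0 < b) (k : ℕ) : p a (b + 1) k * (k + b) = p a b k := by
  have h2 : 0 < Real.Gamma (k + b) := Real.Gamma_pos_of_pos (by positivity)
  have h4 : (k : ℝ) + b ≠ 0 := by positivity
  unfold p
  rw [← add_assoc, Real.Gamma_add_one h4]
  field_simp

lemma p_succ_b_succ (ha : 0 < a) (hb : 0 < b) (k : ℕ) :
    p a b (k + 1) * (k + a) = p a (b + 1) k := by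
  have h4 : (k : ℝ) + b ≠ 0 := by positivity
  have := p_succ ha hb k
  rw [← p_b_succ hb k, ← mul_assoc] at this
  exact mul_right_cancel₀ h4 this

/-- Ratio test, with an extra factor `k + 1` so that it also covers the differentiated series. -/
lemma summable_aux (ha : 0 < a) (hb : 0 < b) {z : ℝ} (hz : 0 < z) :
    Summable fun k : ℕ => p a b k * ((k + 1) * z ^ k) := by
  have hp := p_pos ha hb
  apply summable_of_ratio_test_tendsto_lt_one (l := 0) one_pos
  · refine Eventually.of_forall fun k => ?_
    have := hp k
    positivity
  · have h1 : Tendsto (fun k : ℕ => 2 * z / ((k : ℝ) + a) * (1 / b)) atTop (𝓝 0) := by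
      have h : Tendsto (fun k : ℕ => 2 * z / ((k : ℝ) + a)) atTop (𝓝 0) :=
        Tendsto.const_div_atTop (tendsto_atTop_add_const_right _ _ tendsto_natCast_atTop_atTop) _
      simpa using h.mul_const (1 / b)
    refine squeeze_zero (fun k => by positivity) (fun k => ?_) h1
    have h0 := hp k
    have h0' := hp (k + 1)
    have hk := p_succ ha hb k
    rw [Real.norm_of_nonneg (by positivity), Real.norm_of_nonneg (by positivity), ← hk]
    have : p a b (k + 1) * ((((k + 1 : ℕ) : ℝ) + 1) * z ^ (k + 1)) /
        (p a b (k + 1) * ((k + a) * (k + b)) * ((k + 1) * z ^ k))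
        = ((k + 2) / (k + 1)) * z / (k + a) * (1 / (k + b)) := by
      push_cast
      field_simp
      ring
    rw [this]
    have h2 : ((k : ℝ) + 2) / (k + 1) ≤ 2 := by
      rw [div_le_iff₀ (by positivity)]
      have : (0 : ℝ) ≤ k := by positivity
      linarith
    gcongr
    have : (0 : ℝ) ≤ k := by positivity
    linarith

lemma summable_S (ha : 0 < a) (hb : 0 < b) (z : ℝ) : Summable fun k : ℕ => p a b k * z ^ k := by
  refine Summable.of_norm_bounded (summable_aux ha hb (z := |z| + 1) (by positivity)) fun k => ?_
  rw [norm_mul, Real.norm_of_nonneg (p_pos ha hb k).le, norm_pow, Real.norm_eq_abs]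
  refine mul_le_mul_of_nonneg_left ?_ (p_pos ha hb k).le
  have h1 : |z| ^ k ≤ (|z| + 1) ^ k := by gcongr; linarith
  have h2 : (0 : ℝ) ≤ k * (|z| + 1) ^ k := by positivity
  linarith

lemma bound_S' (ha : 0 < a) (hb : 0 < b) {z R : ℝ} (hR : 1 ≤ R) (hz : |z| ≤ R) (k : ℕ) :
    ‖p a b k * (k * z ^ (k - 1))‖ ≤ p a b k * ((k + 1) * R ^ k) := by
  rw [norm_mul, Real.norm_of_nonneg (p_pos ha hb k).le, norm_mul, norm_pow, Real.norm_eq_abs,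
    Real.norm_eq_abs, Nat.abs_cast]
  refine mul_le_mul_of_nonneg_left ?_ (p_pos ha hb k).le
  have h1 : |z| ^ (k - 1) ≤ R ^ k :=
    (pow_le_pow_left₀ (abs_nonneg _) hz _).trans (pow_le_pow_right₀ hR (Nat.sub_le _ _))
  gcongr
  linarith

lemma hasDerivAt_S (ha : 0 < a) (hb : 0 < b) (z : ℝ) : HasDerivAt (S a b) (S' a b z) z := by
  have hR : (1 : ℝ) ≤ |z| + 1 := by have := abs_nonneg z; linarith
  have hz : z ∈ Metric.ball (0 : ℝ) (|z| + 1) := by simp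
  unfold S S'
  refine hasDerivAt_tsum_of_isPreconnected (g := fun k w => p a b k * w ^ k)
    (g' := fun k w => p a b k * (k * w ^ (k - 1)))
    (u := fun k : ℕ => p a b k * ((k + 1) * (|z| + 1) ^ k)) (t := Metric.ball (0 : ℝ) (|z| + 1))
    (summable_aux ha hb (z := |z| + 1) (by positivity)) Metric.isOpen_ball
    (convex_ball _ _).isPreconnected (fun k w _ => ?_) (fun k w hw => ?_) hz
    (summable_S ha hb z) hz
  · exact (hasDerivAt_pow k w).const_mul _
  · refine bound_S' ha hb hR ?_ k
    simpa using (Metric.mem_ball.1 hw).le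

lemma continuous_S (ha : 0 < a) (hb : 0 < b) : Continuous (S a b) :=
  continuous_iff_continuousAt.2 fun z => (hasDerivAt_S ha hb z).continuousAt

lemma hasSum_of_eq {f g : ℕ → ℝ} {s : ℝ} (hg : HasSum g s) (h : ∀ k, f k = g k) : HasSum f s := by
  rwa [funext h]

lemma hasSum_mul_S' (ha : 0 < a) (hb : 0 < b) (z : ℝ) :
    HasSum (fun k : ℕ => k * (p a b k * z ^ k)) (z * S' a b z) := by
  have h : Summable fun k : ℕ => p a b k * (k * z ^ (k - 1)) :=
    Summable.of_norm_bounded (summable_aux ha hb (z := |z| + 1) (by positivity))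
      fun k => bound_S' ha hb (by have := abs_nonneg z; linarith) (by linarith) k
  refine hasSum_of_eq (h.hasSum.mul_left z) fun k => ?_
  cases k with
  | zero => simp
  | succ n =>
    rw [Nat.add_sub_cancel, pow_succ]
    ring

/-- The relation behind `(x^(ν+1) t̃_{μ+1,ν+1})' = x^(ν+1) t̃_{μ,ν}`. -/
lemma mul_S'_add (ha : 0 < a) (hb : 0 < b) (z : ℝ) :
    z * S' a (b + 1) z + b * S a (b + 1) z = S a b z := by
  have hb' : 0 < b + 1 := by linarith
  have h := (hasSum_mul_S' ha hb' z).add ((summable_S ha hb' z).hasSum.mul_left b)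
  refine h.unique ?_
  refine hasSum_of_eq ((summable_S ha hb z).hasSum) fun k => ?_
  rw [← p_b_succ hb]
  ring

/-- The relation behind `(x^(-ν) t̃_{μ,ν})' = x^(-ν) (t̃_{μ+1,ν+1} + A)`; the inhomogeneous term `A`
comes from the coefficient of index `0`. -/
lemma mul_S'_add' (ha : 0 < a) (hb : 0 < b) (z : ℝ) :
    z * S' a b z + (a - 1) * S a b z = (a - 1) * p a b 0 + z * S a (b + 1) z := by
  have hb' : 0 < b + 1 := by linarith
  have h := (hasSum_mul_S' ha hb z).add ((summable_S ha hb z).hasSum.mul_left (a - 1))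
  refine h.unique ?_
  have h' : HasSum (fun k : ℕ => ((k + 1 : ℕ) : ℝ) * (p a b (k + 1) * z ^ (k + 1)) +
      (a - 1) * (p a b (k + 1) * z ^ (k + 1))) (z * S a (b + 1) z) := by
    refine hasSum_of_eq ((summable_S ha hb' z).hasSum.mul_left z) fun k => ?_
    rw [← p_succ_b_succ ha hb]
    push_cast
    ring
  have h'' := (hasSum_nat_add_iff (f := fun k : ℕ => (k : ℝ) * (p a b k * z ^ k) +
      (a - 1) * (p a b k * z ^ k)) 1).1 h'
  simpa [add_comm] using h''

lemma p_zero_le_S (ha : 0 < a) (hb : 0 < b) {z : ℝ} (hz : 0 ≤ z) : p a b 0 ≤ S a b z := by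
  have := (summable_S ha hb z).le_tsum 0
    (fun k _ => mul_nonneg (p_pos ha hb k).le (pow_nonneg hz k))
  simpa [S] using this

lemma S_pos (ha : 0 < a) (hb : 0 < b) {z : ℝ} (hz : 0 ≤ z) : 0 < S a b z :=
  (p_pos ha hb 0).trans_le (p_zero_le_S ha hb hz)

/-! ### The Lommel function: derivatives and behaviour at the origin -/

variable {μ ν x : ℝ}

lemma lommel_eq (μ ν : ℝ) (hx : 0 < x) :
    lommel μ ν x = (x / 2) ^ (μ + 1) * S ((μ - ν + 3) / 2) ((μ + ν + 3) / 2) ((x / 2) ^ 2) := by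
  unfold lommel S p
  rw [← tsum_mul_left]
  congr 1
  funext k
  rw [show μ + 2 * (k : ℝ) + 1 = (μ + 1) + ((2 * k : ℕ) : ℝ) by push_cast; ring,
    Real.rpow_add (by positivity), Real.rpow_natCast, pow_mul]
  ring

lemma lommel_succ_eq (μ ν : ℝ) (hx : 0 < x) :
    lommel (μ + 1) (ν + 1) x =
      (x / 2) ^ (μ + 1) * (x / 2) *
        S ((μ - ν + 3) / 2) ((μ + ν + 3) / 2 + 1) ((x / 2) ^ 2) := by
  rw [lommel_eq _ _ hx, Real.rpow_add_one (by positivity)]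
  congr 2
  · ring
  · ring

lemma lommel_pos (h1 : -1/2 < ν) (h2 : ν < μ + 1) (hx : 0 < x) : 0 < lommel μ ν x := by
  rw [lommel_eq _ _ hx]
  have := S_pos (a := (μ - ν + 3) / 2) (b := (μ + ν + 3) / 2) (by linarith) (by linarith)
    (sq_nonneg (x / 2))
  positivity

/-- The nonnegative inhomogeneous term in the formula for the derivative of `t̃_{μ,ν}`. -/
noncomputable def A (μ ν x : ℝ) : ℝ :=
  2 * (x / 2) ^ (μ + 1) * (((μ - ν + 3) / 2 - 1) * p ((μ - ν + 3) / 2) ((μ + ν + 3) / 2) 0) / x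

lemma A_nonneg (h1 : -1/2 < ν) (h2 : ν < μ + 1) (hx : 0 < x) : 0 ≤ A μ ν x := by
  have h := p_pos (a := (μ - ν + 3) / 2) (b := (μ + ν + 3) / 2) (by linarith) (by linarith) 0
  have h' : 0 ≤ (μ - ν + 3) / 2 - 1 := by linarith
  unfold A; positivity

lemma hasDerivAt_aux (μ : ℝ) (ha : 0 < a) (hb : 0 < b) (hx : 0 < x) :
    HasDerivAt (fun x : ℝ => (x / 2) ^ (μ + 1) * S a b ((x / 2) ^ 2))
      ((x / 2) ^ (μ + 1) *
        ((μ + 1) * S a b ((x / 2) ^ 2) + 2 * ((x / 2) ^ 2 * S' a b ((x / 2) ^ 2))) / x) x := by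
  have h0 : HasDerivAt (fun x : ℝ => x / 2) (1 / 2) x := (hasDerivAt_id x).div_const 2
  have h1 := h0.rpow_const (p := μ + 1) (Or.inl (by positivity))
  have h2 : HasDerivAt (fun x : ℝ => S a b ((x / 2) ^ 2)) _ x :=
    (hasDerivAt_S ha hb ((x / 2) ^ 2)).comp_of_eq x (h0.fun_pow 2) rfl
  refine (h1.mul h2).congr_deriv ?_
  rw [Real.rpow_sub_one (by positivity)]
  field_simp
  ring

lemma hasDerivAt_lommel (h1 : -1/2 < ν) (h2 : ν < μ + 1) (hx : 0 < x) :
    HasDerivAt (lommel μ ν)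
      (lommel (μ + 1) (ν + 1) x + ν / x * lommel μ ν x + A μ ν x) x := by
  have ha : 0 < (μ - ν + 3) / 2 := by linarith
  have hb : 0 < (μ + ν + 3) / 2 := by linarith
  refine ((hasDerivAt_aux μ ha hb hx).congr_of_eventuallyEq ?_).congr_deriv ?_
  · filter_upwards [lt_mem_nhds hx] with y hy using lommel_eq _ _ hy
  · rw [lommel_succ_eq _ _ hx, lommel_eq _ _ hx, A,
      eq_sub_of_add_eq (mul_S'_add' ha hb ((x / 2) ^ 2))]
    field_simp
    ring

lemma hasDerivAt_lommel_succ (h1 : -1/2 < ν) (h2 : ν < μ + 1) (hx : 0 < x) :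
    HasDerivAt (lommel (μ + 1) (ν + 1))
      (lommel μ ν x - (ν + 1) / x * lommel (μ + 1) (ν + 1) x) x := by
  have ha : 0 < (μ - ν + 3) / 2 := by linarith
  have hb : 0 < (μ + ν + 3) / 2 := by linarith
  refine ((hasDerivAt_aux (μ + 1) ha (b := (μ + ν + 3) / 2 + 1) (by linarith)
    hx).congr_of_eventuallyEq ?_).congr_deriv ?_
  · filter_upwards [lt_mem_nhds hx] with y hy
    rw [lommel_succ_eq _ _ hy, ← Real.rpow_add_one (by positivity)]
  · rw [lommel_succ_eq _ _ hx, lommel_eq _ _ hx, Real.rpow_add_one (by positivity),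
      eq_sub_of_add_eq (mul_S'_add ha hb ((x / 2) ^ 2))]
    field_simp
    ring

lemma rpow_mul_lommel (s μ ν : ℝ) (hx : 0 < x) :
    x ^ s * lommel μ ν x = x ^ (s + μ + 1) *
      ((2 ^ (μ + 1))⁻¹ * S ((μ - ν + 3) / 2) ((μ + ν + 3) / 2) ((x / 2) ^ 2)) := by
  rw [lommel_eq _ _ hx, Real.div_rpow hx.le (by norm_num), add_assoc s,
    Real.rpow_add hx s]
  ring

lemma continuous_aux (h1 : -1/2 < ν) (h2 : ν < μ + 1) : Continuous fun x : ℝ =>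
    ((2 : ℝ) ^ (μ + 1))⁻¹ * S ((μ - ν + 3) / 2) ((μ + ν + 3) / 2) ((x / 2) ^ 2) := by
  have := continuous_S (a := (μ - ν + 3) / 2) (b := (μ + ν + 3) / 2) (by linarith) (by linarith)
  fun_prop

lemma continuousOn_rpow_mul_lommel {s : ℝ} (h1 : -1/2 < ν) (h2 : ν < μ + 1) (hs : 0 < s)
    (hs' : 0 < s + μ + 1) : ContinuousOn (fun x : ℝ => x ^ s * lommel μ ν x) (Ici 0) := by
  have h : Continuous fun x : ℝ => x ^ (s + μ + 1) *
      ((2 ^ (μ + 1))⁻¹ * S ((μ - ν + 3) / 2) ((μ + ν + 3) / 2) ((x / 2) ^ 2)) :=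
    (Real.continuous_rpow_const hs'.le).mul (continuous_aux h1 h2)
  refine h.continuousOn.congr fun x hx => ?_
  rcases (mem_Ici.1 hx).eq_or_lt with rfl | hx
  · simp [Real.zero_rpow hs.ne', Real.zero_rpow hs'.ne']
  · exact rpow_mul_lommel _ _ _ hx

lemma intervalIntegrable_lommel (β : ℝ) (h1 : -1/2 < ν) (h2 : ν < μ + 1) (hx : 0 ≤ x) :
    IntervalIntegrable (fun u => Real.exp (-β * u) * u ^ ν * lommel μ ν u) volume 0 x := by
  have h := (intervalIntegral.intervalIntegrable_rpow' (a := 0) (b := x) (r := ν + μ + 1)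
    (by linarith)).mul_continuousOn
    (g := fun u => Real.exp (-β * u) *
      ((2 ^ (μ + 1))⁻¹ * S ((μ - ν + 3) / 2) ((μ + ν + 3) / 2) ((u / 2) ^ 2)))
    (Continuous.continuousOn (by have := continuous_aux h1 h2; fun_prop))
  refine h.congr fun u hu => ?_
  rw [uIoc_of_le hx] at hu
  have := rpow_mul_lommel ν μ ν hu.1
  rw [mul_assoc (Real.exp _), this]
  ring

/-! ### Comparison of consecutive Lommel functions -/

lemma lommel_succ_lt (h1 : -1/2 < ν) (h2 : ν < μ + 1) (hx : 0 < x) :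
    lommel (μ + 1) (ν + 1) x < lommel μ ν x := by
  have hmono : StrictMonoOn (fun x : ℝ => Real.exp x * (x ^ (ν + 1) * lommel μ ν x -
      x ^ (ν + 1) * lommel (μ + 1) (ν + 1) x)) (Ici 0) := by
    refine strictMonoOn_of_deriv_pos (convex_Ici 0) ?_ fun y hy => ?_
    · exact Real.continuous_exp.continuousOn.mul
        ((continuousOn_rpow_mul_lommel h1 h2 (by linarith) (by linarith)).sub
          (continuousOn_rpow_mul_lommel (by linarith) (by linarith) (by linarith) (by linarith)))
    · rw [interior_Ici, mem_Ioi] at hy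
      have hr := Real.hasDerivAt_rpow_const (p := ν + 1) (Or.inl hy.ne')
      have hd := (Real.hasDerivAt_exp y).mul ((hr.mul (hasDerivAt_lommel h1 h2 hy)).sub
        (hr.mul (hasDerivAt_lommel_succ h1 h2 hy)))
      have he : 0 < Real.exp y * (y ^ (ν + 1) *
          ((2 * ν + 1) * lommel μ ν y / y + A μ ν y)) := by
        have := A_nonneg h1 h2 hy
        have := lommel_pos h1 h2 hy
        have : 0 < 2 * ν + 1 := by linarith
        positivity
      refine lt_of_lt_of_eq he ?_
      refine Eq.trans ?_ hd.deriv.symm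
      simp only [Pi.mul_apply, Pi.sub_apply]
      rw [Real.rpow_sub_one hy.ne']
      field_simp
      ring
  have h := hmono self_mem_Ici hx.le hx
  simp only [Real.zero_rpow (show ν + 1 ≠ 0 by linarith), zero_mul, sub_zero, mul_zero,
    ← mul_sub] at h
  have := pos_of_mul_pos_right h (Real.exp_pos x).le
  have := pos_of_mul_pos_right this (Real.rpow_nonneg hx.le _)
  linarith

/-- In terms of `S` and with `y = x/2`, the claim is `S(a,b) < (b+y) S(a,b+1)`, which by `mul_S'_add`
and `mul_S'_add'` reduces to `y S(a,b+2) < S(a,b+1)`, that is, to `t̃_{μ+2,ν+2} < t̃_{μ+1,ν+1}`. -/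
lemma mul_lommel_lt (h1 : -1/2 < ν) (h2 : ν < μ + 1) (hx : 0 < x) :
    x * lommel μ ν x < (μ + ν + 3 + x) * lommel (μ + 1) (ν + 1) x := by
  have ha : 0 < (μ - ν + 3) / 2 := by linarith
  have hb : 0 < (μ + ν + 3) / 2 := by linarith
  have hb' : 0 < (μ + ν + 3) / 2 + 1 := by linarith
  have h := lommel_succ_lt (μ := μ + 1) (ν := ν + 1) (by linarith) (by linarith) hx
  rw [lommel_succ_eq _ _ hx, lommel_eq _ _ hx] at h
  rw [show (μ + 1 - (ν + 1) + 3) / 2 = (μ - ν + 3) / 2 by ring,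
    show (μ + 1 + (ν + 1) + 3) / 2 = (μ + ν + 3) / 2 + 1 by ring, mul_assoc] at h
  have h := lt_of_mul_lt_mul_left h (by positivity)
  rw [lommel_succ_eq _ _ hx, lommel_eq _ _ hx]
  have e1 := mul_S'_add ha hb ((x / 2) ^ 2)
  have e2 := mul_S'_add' ha hb' ((x / 2) ^ 2)
  have e3 := p_zero_le_S ha hb' (sq_nonneg (x / 2))
  have e4 := mul_le_mul_of_nonneg_left e3 (show 0 ≤ (μ - ν + 3) / 2 - 1 by linarith)
  have e5 := mul_lt_mul_of_pos_left h (half_pos hx)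
  have key : S ((μ - ν + 3) / 2) ((μ + ν + 3) / 2) ((x / 2) ^ 2) < ((μ + ν + 3) / 2 + x / 2) *
      S ((μ - ν + 3) / 2) ((μ + ν + 3) / 2 + 1) ((x / 2) ^ 2) := by
    linarith
  have := mul_lt_mul_of_pos_left key (show 0 < x * (x / 2) ^ (μ + 1) by positivity)
  linarith

/-! ### The integral bound at `x*` -/

lemma integral_exp_neg_le (h1 : -1/2 < ν) (h2 : ν < μ + 1) (hx : 0 < x) :
    ∫ u in (0:ℝ)..x, Real.exp (-1 * u) * u ^ ν * lommel μ ν u * (2 * ν + 1) ≤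
      Real.exp (-x) * (x ^ (ν + 1) * lommel μ ν x + x ^ (ν + 1) * lommel (μ + 1) (ν + 1) x) := by
  have h := intervalIntegral.integral_le_sub_of_hasDeriv_right_of_le (a := 0) (b := x)
    (g := fun x : ℝ => Real.exp (-x) * (x ^ (ν + 1) * lommel μ ν x +
      x ^ (ν + 1) * lommel (μ + 1) (ν + 1) x))
    (g' := fun y => Real.exp (-y) * y ^ (ν + 1) *
      ((2 * ν + 1) * lommel μ ν y / y + A μ ν y))
    (φ := fun u => Real.exp (-1 * u) * u ^ ν * lommel μ ν u * (2 * ν + 1)) hx.le ?_ ?_ ?_ ?_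
  · simpa [Real.zero_rpow (show ν + 1 ≠ 0 by linarith)] using h
  · refine ContinuousOn.mono ?_ (Icc_subset_Ici_self : Icc 0 x ⊆ Ici 0)
    exact (Real.continuous_exp.comp continuous_neg).continuousOn.mul
        ((continuousOn_rpow_mul_lommel h1 h2 (by linarith) (by linarith)).add
          (continuousOn_rpow_mul_lommel (by linarith) (by linarith) (by linarith) (by linarith)))
  · intro y hy
    have hy := hy.1
    have hr := Real.hasDerivAt_rpow_const (p := ν + 1) (Or.inl hy.ne')
    refine HasDerivAt.hasDerivWithinAt (HasDerivAt.congr_deriv ((hasDerivAt_neg y).exp.mul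
      ((hr.mul (hasDerivAt_lommel h1 h2 hy)).add
        (hr.mul (hasDerivAt_lommel_succ h1 h2 hy)))) ?_)
    rw [Real.rpow_sub_one hy.ne']
    field_simp
    ring
  · rw [← intervalIntegrable_iff_integrableOn_Icc_of_le hx.le]
    exact (intervalIntegrable_lommel 1 h1 h2 hx.le).mul_const _
  · intro y hy
    have hy := hy.1
    rw [Real.rpow_add_one hy.ne', neg_one_mul, mul_add (Real.exp (-y) * (y ^ ν * y))]
    have : 0 ≤ Real.exp (-y) * (y ^ ν * y) * A μ ν y := by
      have := A_nonneg h1 h2 hy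
      positivity
    refine le_trans (le_of_eq ?_) (le_add_of_nonneg_right this)
    field_simp

/-- The bound at `x*`, where the first entry of the maximum suffices. -/
lemma integral_lt (β : ℝ) (hβ : β < 1) (h1 : -1/2 < ν) (h2 : ν < μ + 1) (hx : 0 < x) :
    ∫ u in (0:ℝ)..x, Real.exp (-β * u) * u ^ ν * lommel μ ν u <
      (μ + ν + 3 + 2 * x) / (2 * ν + 1) *
        (Real.exp (-β * x) * x ^ ν * lommel (μ + 1) (ν + 1) x) := by
  have hν : 0 < 2 * ν + 1 := by linarith
  have hle : ∫ u in (0:ℝ)..x, Real.exp (-β * u) * u ^ ν * lommel μ ν u ≤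
      ∫ u in (0:ℝ)..x, Real.exp ((1 - β) * x) *
        (Real.exp (-1 * u) * u ^ ν * lommel μ ν u) := by
    refine intervalIntegral.integral_mono_on_of_le_Ioo hx.le
      (intervalIntegrable_lommel β h1 h2 hx.le)
      ((intervalIntegrable_lommel 1 h1 h2 hx.le).const_mul _) fun u hu => ?_
    have h3 := lommel_pos h1 h2 hu.1
    have h4 : Real.exp (-β * u) ≤ Real.exp ((1 - β) * x) * Real.exp (-1 * u) := by
      rw [← Real.exp_add, Real.exp_le_exp]
      have := mul_le_mul_of_nonneg_left hu.2.le (show 0 ≤ 1 - β by linarith)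
      linarith
    have h5 : 0 ≤ u ^ ν := Real.rpow_nonneg hu.1.le _
    rw [← mul_assoc, ← mul_assoc]
    gcongr
  refine hle.trans_lt ?_
  rw [intervalIntegral.integral_const_mul]
  have h := integral_exp_neg_le h1 h2 hx
  rw [intervalIntegral.integral_mul_const, ← le_div_iff₀ hν] at h
  refine (mul_le_mul_of_nonneg_left h (Real.exp_pos _).le).trans_lt ?_
  have hE : Real.exp ((1 - β) * x) * Real.exp (-x) = Real.exp (-β * x) := by
    rw [← Real.exp_add]; ring_nf
  have key := mul_lommel_lt h1 h2 hx
  have hpos : 0 < Real.exp (-β * x) * x ^ ν / (2 * ν + 1) := by positivity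
  have := mul_lt_mul_of_pos_left key hpos
  rw [Real.rpow_add_one hx.ne', mul_div_assoc', ← mul_assoc, hE]
  calc _ = Real.exp (-β * x) * x ^ ν / (2 * ν + 1) * (x * lommel μ ν x) +
        Real.exp (-β * x) * x ^ ν / (2 * ν + 1) * (x * lommel (μ + 1) (ν + 1) x) := by ring
    _ < Real.exp (-β * x) * x ^ ν / (2 * ν + 1) *
          ((μ + ν + 3 + x) * lommel (μ + 1) (ν + 1) x) +
        Real.exp (-β * x) * x ^ ν / (2 * ν + 1) * (x * lommel (μ + 1) (ν + 1) x) := by gcongr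
    _ = _ := by ring

end LommelAux

/-! ### Extension to `x ≥ x*` -/

open LommelAux in
theorem stmt1 (μ ν β xs : ℝ) (hμ : μ > -3/2) (hν1 : -1/2 < ν) (hν2 : ν < μ + 1)
    (hβ1 : 0 < β) (hβ2 : β < 1) (hxs : xs > 1 / (1 - β)) :
    ∀ x : ℝ, x ≥ xs →
      ∫ u in (0:ℝ)..x, Real.exp (-β * u) * u ^ ν * lommel μ ν u <
        max ((μ + ν + 3 + 2 * xs) / (2 * ν + 1)) (xs / ((1 - β) * xs - 1)) *
          (Real.exp (-β * x) * x ^ ν * lommel (μ + 1) (ν + 1) x) := by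
  intro x hx
  have hβ : 0 < 1 - β := by linarith
  have hxs0 : 0 < xs := lt_trans (by positivity) hxs
  have hxs1 : 0 < (1 - β) * xs - 1 := by
    rw [gt_iff_lt, div_lt_iff₀ hβ] at hxs
    linarith
  set M := max ((μ + ν + 3 + 2 * xs) / (2 * ν + 1)) (xs / ((1 - β) * xs - 1)) with hM
  have hM1 : (μ + ν + 3 + 2 * xs) / (2 * ν + 1) ≤ M := le_max_left _ _
  have hM2 : xs / ((1 - β) * xs - 1) ≤ M := le_max_right _ _
  have hM0 : 0 < M := lt_of_lt_of_le (by positivity) hM2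
  have hint := intervalIntegrable_lommel β hν1 hν2 (hxs0.le.trans hx)
  have hint1 := intervalIntegrable_lommel β hν1 hν2 hxs0.le
  have hint2 := hint1.symm.trans hint
  rw [← intervalIntegral.integral_add_adjacent_intervals hint1 hint2]
  have hpos : 0 < Real.exp (-β * xs) * xs ^ ν * lommel (μ + 1) (ν + 1) xs := by
    have := lommel_pos (μ := μ + 1) (ν := ν + 1) (by linarith) (by linarith) hxs0
    positivity
  have hstart := (integral_lt β hβ2 hν1 hν2 hxs0).trans_le
    (mul_le_mul_of_nonneg_right hM1 hpos.le)
  have hd : ∀ y : ℝ, 0 < y → HasDerivAt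
      (fun y : ℝ => M * (Real.exp (-β * y) * y ^ ν * lommel (μ + 1) (ν + 1) y))
      (M * (Real.exp (-β * y) * y ^ ν *
        (lommel μ ν y - (β + 1 / y) * lommel (μ + 1) (ν + 1) y))) y := by
    intro y hy
    have hr := Real.hasDerivAt_rpow_const (p := ν) (Or.inl hy.ne')
    have he : HasDerivAt (fun y : ℝ => Real.exp (-β * y)) (Real.exp (-β * y) * (-β * 1)) y :=
      ((hasDerivAt_id y).const_mul (-β)).exp
    refine (((he.mul hr).mul (hasDerivAt_lommel_succ hν1 hν2 hy)).const_mul M).congr_deriv ?_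
    simp only [Pi.mul_apply]
    rw [Real.rpow_sub_one hy.ne']
    field_simp
    ring
  have hstep := intervalIntegral.integral_le_sub_of_hasDeriv_right_of_le (a := xs) (b := x) hx
    (φ := fun u => Real.exp (-β * u) * u ^ ν * lommel μ ν u)
    (fun y hy => (hd y (hxs0.trans_le hy.1)).continuousAt.continuousWithinAt)
    (fun y hy => (hd y (hxs0.trans hy.1)).hasDerivWithinAt)
    ((intervalIntegrable_iff_integrableOn_Icc_of_le hx).1 hint2) (fun y hy => ?_)
  · linarith
  · have hy0 : 0 < y := hxs0.trans hy.1
    have ht := lommel_pos hν1 hν2 hy0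
    have hT := lommel_succ_lt hν1 hν2 hy0
    -- `y ↦ 1 - β - 1/y` increases, so its values beyond `xs` are at least `1/M`.
    have hMy : 1 ≤ M * (1 - β - 1 / y) := by
      have e1 : 1 ≤ M * (1 - β - 1 / xs) := by
        rw [div_le_iff₀ hxs1] at hM2
        have : M * (1 - β - 1 / xs) = M * ((1 - β) * xs - 1) / xs := by field_simp
        rw [this, le_div_iff₀ hxs0]
        linarith
      have e2 : 1 / y ≤ 1 / xs := one_div_le_one_div_of_le hxs0 hy.1.le
      have e3 := mul_le_mul_of_nonneg_left e2 hM0.le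
      linarith
    have hA : lommel μ ν y ≤
        M * (lommel μ ν y - (β + 1 / y) * lommel (μ + 1) (ν + 1) y) := by
      have e1 := mul_le_mul_of_nonneg_right hMy ht.le
      have e2 := mul_le_mul_of_nonneg_left hT.le (show 0 ≤ M * (β + 1 / y) by positivity)
      linarith
    have := mul_le_mul_of_nonneg_left hA
      (show 0 ≤ Real.exp (-β * y) * y ^ ν by positivity)
    linarith
end
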